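/- Let q be a prime power and let ν, m₁, m₂, t be positive integers with ν > m₁ ≥ t+1, ν > m₂ ≥ t+1, and 2ν ≥ m₁ + 2m₂ + 3. Suppose ℱ₁ ⊆ 𝒫_{m₁} and ℱ₂ ⊆ 𝒫_{m₂} are nonempty maximal non-trivial cross t-intersecting families with (τ_t(ℱ₁), τ_t(ℱ₂)) = (t, t+1). Then one of the following holds: (1) ℱ₁ = 𝒞₁(M,T;m₁,t) and ℱ₂ = 𝒞₂(M,T;m₂) for some M ∈ 𝒫_{m₂+1} and t-dimensional subspace T of M; (2) ℱ₁ = 𝒞₃(S;m₁) and ℱ₂ = 𝒞₄(S;m₂,t) for some S ∈ 𝒫_{t+1}; (3) |ℱ₁|·|ℱ₂| < c₁(ν,m₁,m₂,t). -/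

import Mathlib

open Finset Module

noncomputable section

/-- Gaussian binomial coefficient `[n choose k]_q` as a rational number. -/
def gaussBinom (q n k : ℕ) : ℚ :=
  ∏ i ∈ Finset.range k, ((q : ℚ) ^ ((n : ℤ) - i) - 1) / ((q : ℚ) ^ ((k : ℤ) - i) - 1)

/-- `N'(a; m; 2ν)`, the number of `m`-dim totally isotropic subspaces containing
a fixed `a`-dim one. -/
def Nprime (q a m ν : ℕ) : ℚ :=
  ∏ i ∈ Finset.Icc 1 (m - a), ((q : ℚ) ^ (2 * ((ν : ℤ) - m + i)) - 1) / ((q : ℚ) ^ (i : ℤ) - 1)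

variable {K V : Type*} [Field K] [AddCommGroup V] [Module K V]

/-- A subspace is totally isotropic w.r.t. the bilinear form `f`. -/
def TotallyIsotropic (f : V →ₗ[K] V →ₗ[K] K) (W : Submodule K V) : Prop :=
  ∀ x ∈ W, ∀ y ∈ W, f x y = 0

/-- `polar f m` = `𝒫_m`, the set of `m`-dimensional totally isotropic subspaces. -/
def polar (f : V →ₗ[K] V →ₗ[K] K) (m : ℕ) : Set (Submodule K V) :=
  {W | TotallyIsotropic f W ∧ finrank K W = m}

/-- `X` is a `t`-cover of the family `ℱ`. -/
def IsTCover (f : V →ₗ[K] V →ₗ[K] K) (t : ℕ) (ℱ : Set (Submodule K V))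
    (X : Submodule K V) : Prop :=
  TotallyIsotropic f X ∧ ∀ F ∈ ℱ, t ≤ finrank K ↥(X ⊓ F)

/-- `τ_t(ℱ)`, the minimum dimension of a `t`-cover of `ℱ`. -/
def tauCover (f : V →ₗ[K] V →ₗ[K] K) (t : ℕ) (ℱ : Set (Submodule K V)) : ℕ :=
  sInf {x | ∃ X, IsTCover f t ℱ X ∧ finrank K ↥X = x}

def C1 (f : V →ₗ[K] V →ₗ[K] K) (M T : Submodule K V) (m t : ℕ) : Set (Submodule K V) :=
  {F | F ∈ polar f m ∧ T ≤ F ∧ t + 1 ≤ finrank K ↥(F ⊓ M)}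

def C2 (f : V →ₗ[K] V →ₗ[K] K) (M T : Submodule K V) (m : ℕ) : Set (Submodule K V) :=
  {F | F ∈ polar f m ∧ T ≤ F} ∪ {F | F ∈ polar f m ∧ F ≤ M}

def C3 (f : V →ₗ[K] V →ₗ[K] K) (S : Submodule K V) (m : ℕ) : Set (Submodule K V) :=
  {F | F ∈ polar f m ∧ S ≤ F}

def C4 (f : V →ₗ[K] V →ₗ[K] K) (S : Submodule K V) (m t : ℕ) : Set (Submodule K V) :=
  {F | F ∈ polar f m ∧ t ≤ finrank K ↥(F ⊓ S)}

def s0 (q ν m s t : ℕ) : ℚ :=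
  gaussBinom q (s - t) 1 * Nprime q (t + 1) m ν - q * gaussBinom q (s - t) 2 * Nprime q (t + 2) m ν

/-!
Let `T` and `S` be covers of `ℱ₁` and `ℱ₂` of minimum dimensions `t` and `t + 1`. Every member of
`ℱ₁` contains `T`, and maximality puts every `F ∈ 𝒫_{m₂}` through `T` into `ℱ₂`; choosing such an
`F` in general position with respect to `S` gives `T ≤ S`. Let `M` be the join of all
`(t + 1)`-dimensional `t`-covers of `ℱ₂` through `T`. Any `F ∈ ℱ₂` not containing `T` meets `T` in
dimension `t - 1`, and so satisfies `M ≤ T ⊔ F` and meets `M` in a hyperplane; in particular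
`dim M ≤ m₂ + 1`, with equality only for the pair `𝒞₁`, `𝒞₂`. If every member of `ℱ₁` contains `S`,
the pair is `𝒞₃`, `𝒞₄`.

In the remaining case, write `N_m(a)` for the number of `m`-dimensional totally isotropic subspaces
through a fixed `a`-dimensional one. A member of `ℱ₁` either contains one of the `[dim M - t]`
subspaces covering `T` inside `M`, or is counted by a lower-order term, so
`|ℱ₁| ≤ ([m₂ - t] + 1 / 2) N_{m₁}(t + 1)`. A member of `ℱ₂` either contains `T` or contains one of
at most `q ^ dim M` hyperplanes of `M`, so `|ℱ₂| ≤ (1 + 1 / q ^ (m₂ + 1 - t)) N_{m₂}(t)`. By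
Bonferroni `|𝒞₁| ≥ ([m₂ + 1 - t] - 1 / 2) N_{m₁}(t + 1)`, while `|𝒞₂| ≥ N_{m₂}(t)`.
-/

section Arithmetic

/-- The Gaussian integer `[d]_q = 1 + q + ⋯ + q ^ (d - 1)`: the number of points of the projective
space of a `d`-dimensional vector space over the field with `q` elements. -/
def qNumber (q d : ℕ) : ℕ := ∑ i ∈ range d, q ^ i

lemma qNumber_succ (q d : ℕ) : qNumber q (d + 1) = qNumber q d + q ^ d :=
  sum_range_succ _ _

lemma qNumber_mono (q : ℕ) : Monotone (qNumber q) := fun _ _ h ↦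
  sum_le_sum_of_subset (range_mono h)

lemma qNumber_lt_pow {q : ℕ} (hq : 2 ≤ q) (d : ℕ) : qNumber q d < q ^ d :=
  Nat.geomSum_lt hq fun _ ↦ mem_range.1

lemma qNumber_mul_sub_one (q d : ℕ) : (qNumber q d : ℚ) * (q - 1) = (q : ℚ) ^ d - 1 := by
  simpa [qNumber] using geom_sum_mul (q : ℚ) d

lemma qNumber_add_half_mul_lt {q b : ℕ} (hq : 2 ≤ q) (hb : 1 ≤ b) :
    ((qNumber q b : ℚ) + 1 / 2) * (1 + 1 / (q : ℚ) ^ (b + 1)) < qNumber q (b + 1) - 1 / 2 := by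
  have hqb : (2 : ℚ) ≤ (q : ℚ) ^ b := by
    exact_mod_cast hq.trans (Nat.le_self_pow (by omega) q)
  have hlt : (qNumber q b : ℚ) + 1 ≤ (q : ℚ) ^ b := by exact_mod_cast qNumber_lt_pow hq b
  have hpow : 2 * (q : ℚ) ^ b ≤ (q : ℚ) ^ (b + 1) := by
    rw [pow_succ, mul_comm]
    gcongr
    exact_mod_cast hq
  have hsmall : ((qNumber q b : ℚ) + 1 / 2) * (1 / (q : ℚ) ^ (b + 1)) < 1 / 2 := by
    rw [mul_one_div, div_lt_iff₀ (by positivity)]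
    linarith
  rw [qNumber_succ]
  push_cast
  linarith

/-- The number of `m`-dimensional totally isotropic subspaces containing a given `a`-dimensional
one. This is `Nprime`, corrected to vanish for `m < a`, where `Nprime` is an empty product. -/
def isotropicCount (q ν m a : ℕ) : ℚ := if a ≤ m then Nprime q a m ν else 0

lemma pow_sub_one_pos {q n : ℕ} (hq : 2 ≤ q) (hn : 0 < n) : (0 : ℚ) < (q : ℚ) ^ n - 1 :=
  sub_pos.2 (one_lt_pow₀ (by exact_mod_cast hq) hn.ne')

lemma isotropicCount_self (q ν m : ℕ) : isotropicCount q ν m m = 1 := by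
  simp [isotropicCount, Nprime]

lemma isotropicCount_of_lt {q ν m a : ℕ} (h : m < a) : isotropicCount q ν m a = 0 :=
  if_neg h.not_ge

lemma isotropicCount_mul_pow_sub_one {q ν m a : ℕ} (hq : 2 ≤ q) (hm : m ≤ ν) (ha : a < m) :
    isotropicCount q ν m a * ((q : ℚ) ^ (m - a) - 1) =
      isotropicCount q ν m (a + 1) * ((q : ℚ) ^ (2 * ν - 2 * a) - 1) := by
  have hden := pow_sub_one_pos (n := m - a) hq (by omega)
  have hexp : (q : ℚ) ^ (2 * ((ν : ℤ) - m + (m - a : ℕ))) = (q : ℚ) ^ (2 * ν - 2 * a) := by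
    rw [← zpow_natCast]
    congr 1
    omega
  obtain ⟨j, hj⟩ : ∃ j, m - a = j + 1 := ⟨m - a - 1, by omega⟩
  rw [isotropicCount, isotropicCount, if_pos ha.le, if_pos (Nat.succ_le_of_lt ha), Nprime, Nprime,
    show m - (a + 1) = j by omega, hj, prod_Icc_succ_top (by omega), ← hj, hexp, zpow_natCast]
  field_simp

lemma isotropicCount_pos {q ν m a : ℕ} (hq : 2 ≤ q) (hm : m ≤ ν) (ha : a ≤ m) :
    0 < isotropicCount q ν m a := by
  induction ha using Nat.decreasingInduction with
  | self => simp [isotropicCount_self]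
  | @of_succ a ha ih =>
    have hpos := mul_pos ih (pow_sub_one_pos (n := 2 * ν - 2 * a) hq (by omega))
    rw [← isotropicCount_mul_pow_sub_one hq hm ha] at hpos
    exact pos_of_mul_pos_left hpos (pow_sub_one_pos hq (by omega)).le

lemma isotropicCount_nonneg {q ν m : ℕ} (hq : 2 ≤ q) (hm : m ≤ ν) (a : ℕ) :
    0 ≤ isotropicCount q ν m a := by
  rcases le_or_gt a m with ha | ha
  · exact (isotropicCount_pos hq hm ha).le
  · exact (isotropicCount_of_lt ha).ge

lemma pow_mul_isotropicCount_succ_le {q ν m a e : ℕ} (hq : 2 ≤ q) (hm : m ≤ ν)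
    (he : e + m + a ≤ 2 * ν) :
    (q : ℚ) ^ e * isotropicCount q ν m (a + 1) ≤ isotropicCount q ν m a := by
  rcases le_or_gt m a with ha | ha
  · rw [isotropicCount_of_lt (by omega), mul_zero]
    exact isotropicCount_nonneg hq hm a
  have hq1 : (1 : ℚ) ≤ q := by exact_mod_cast one_le_two.trans hq
  have hpow : (q : ℚ) ^ e * ((q : ℚ) ^ (m - a) - 1) ≤ (q : ℚ) ^ (2 * ν - 2 * a) - 1 := by
    have hexp : (q : ℚ) ^ (e + (m - a)) ≤ (q : ℚ) ^ (2 * ν - 2 * a) :=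
      pow_le_pow_right₀ hq1 (by omega)
    rw [pow_add] at hexp
    linarith [one_le_pow₀ (n := e) hq1]
  have hnonneg := isotropicCount_nonneg (ν := ν) hq hm (a + 1)
  refine le_of_mul_le_mul_right ?_ (pow_sub_one_pos (n := m - a) hq (by omega))
  rw [isotropicCount_mul_pow_sub_one hq hm ha, mul_comm ((q : ℚ) ^ e), mul_assoc]
  gcongr

lemma pow_mul_isotropicCount_add_le {q ν m : ℕ} (hq : 2 ≤ q) (hm : m ≤ ν) (a j : ℕ) :
    (q : ℚ) ^ j * isotropicCount q ν m (a + j) ≤ isotropicCount q ν m a := by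
  rcases lt_or_ge m (a + j) with hlt | hle
  · rw [isotropicCount_of_lt hlt, mul_zero]
    exact isotropicCount_nonneg hq hm a
  induction j with
  | zero => simp
  | succ j ih =>
    calc (q : ℚ) ^ (j + 1) * isotropicCount q ν m (a + (j + 1))
        = (q : ℚ) ^ j * ((q : ℚ) ^ 1 * isotropicCount q ν m (a + j + 1)) := by ring_nf
      _ ≤ (q : ℚ) ^ j * isotropicCount q ν m (a + j) := by
        gcongr
        exact pow_mul_isotropicCount_succ_le hq hm (by omega)
      _ ≤ isotropicCount q ν m a := ih (by omega)

lemma sq_qNumber_mul_isotropicCount_le {q ν m t d : ℕ} (hq : 2 ≤ q) (hm : m ≤ ν) (ht : 0 < t)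
    (hd : m + 2 * (d + t) + 1 ≤ 2 * ν) :
    (qNumber q d : ℚ) ^ 2 * isotropicCount q ν m (t + 2) ≤ isotropicCount q ν m (t + 1) / 2 := by
  have hnonneg := isotropicCount_nonneg (ν := ν) hq hm (t + 2)
  have hqt : (2 : ℚ) ≤ (q : ℚ) ^ t := by exact_mod_cast hq.trans (Nat.le_self_pow ht.ne' q)
  have hqd : (qNumber q d : ℚ) ≤ (q : ℚ) ^ d := by exact_mod_cast (qNumber_lt_pow hq d).le
  have hratio := pow_mul_isotropicCount_succ_le (a := t + 1) (e := 2 * d + t) hq hm (by omega)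
  have hsq : 2 * (qNumber q d : ℚ) ^ 2 ≤ (q : ℚ) ^ (2 * d + t) := calc
    2 * (qNumber q d : ℚ) ^ 2 ≤ (q : ℚ) ^ t * ((q : ℚ) ^ d) ^ 2 := by gcongr
    _ = (q : ℚ) ^ (2 * d + t) := by ring
  linarith [mul_le_mul_of_nonneg_right hsq hnonneg]

lemma pow_mul_pow_mul_isotropicCount_le_of_add_two_le {q ν m t d : ℕ} (hq : 2 ≤ q) (hm : m ≤ ν)
    (htm : t ≤ m) (hd : t + 2 ≤ d) (hdim : 2 * m + t + 3 ≤ 2 * ν) :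
    (q : ℚ) ^ (m + 1 - t) * ((q : ℚ) ^ d * isotropicCount q ν m (d - 1)) ≤
      isotropicCount q ν m t := by
  obtain ⟨j, rfl⟩ := Nat.exists_eq_add_of_le hd
  calc (q : ℚ) ^ (m + 1 - t) * ((q : ℚ) ^ (t + 2 + j) * isotropicCount q ν m (t + 2 + j - 1))
      = (q : ℚ) ^ (m + 3) * ((q : ℚ) ^ j * isotropicCount q ν m (t + 1 + j)) := by
        rw [← mul_assoc, ← mul_assoc, ← pow_add, ← pow_add]
        congr 2 <;> omega
    _ ≤ (q : ℚ) ^ (m + 3) * isotropicCount q ν m (t + 1) := by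
        gcongr
        exact pow_mul_isotropicCount_add_le hq hm (t + 1) j
    _ ≤ isotropicCount q ν m t := pow_mul_isotropicCount_succ_le hq hm (by omega)

lemma pow_mul_pow_mul_qNumber_mul_isotropicCount_le {q ν m₁ m₂ t : ℕ} (hq : 2 ≤ q) (hm₂ : m₂ ≤ ν)
    (htm₁ : t ≤ m₁) (htm₂ : t ≤ m₂) (hdim : m₁ + 2 * m₂ + 3 ≤ 2 * ν) :
    (q : ℚ) ^ (m₂ + 1 - t) * ((q : ℚ) ^ (t + 1) *
      (qNumber q (m₁ + 1 - t) * isotropicCount q ν m₂ (t + 1))) ≤ isotropicCount q ν m₂ t := by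
  have hnonneg := isotropicCount_nonneg (ν := ν) hq hm₂ (t + 1)
  have hlt : (qNumber q (m₁ + 1 - t) : ℚ) ≤ (q : ℚ) ^ (m₁ + 1 - t) := by
    exact_mod_cast (qNumber_lt_pow hq _).le
  calc (q : ℚ) ^ (m₂ + 1 - t) * ((q : ℚ) ^ (t + 1) *
        (qNumber q (m₁ + 1 - t) * isotropicCount q ν m₂ (t + 1)))
      ≤ (q : ℚ) ^ (m₂ + 1 - t) * ((q : ℚ) ^ (t + 1) *
        ((q : ℚ) ^ (m₁ + 1 - t) * isotropicCount q ν m₂ (t + 1))) := by gcongr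
    _ = (q : ℚ) ^ (m₁ + m₂ + 3 - t) * isotropicCount q ν m₂ (t + 1) := by
        rw [← mul_assoc, ← mul_assoc, ← pow_add, ← pow_add]
        congr 2
        omega
    _ ≤ isotropicCount q ν m₂ t := pow_mul_isotropicCount_succ_le hq hm₂ (by omega)

end Arithmetic

section FiniteCounting

lemma ncard_mul_eq_ncard_mul {α β : Type*} (r : α → β → Prop) {s : Set α} {t : Set β}
    (hs : s.Finite) (ht : t.Finite) {m n : ℚ}
    (hm : ∀ a ∈ s, ({b | b ∈ t ∧ r a b}.ncard : ℚ) = m)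
    (hn : ∀ b ∈ t, ({a | a ∈ s ∧ r a b}.ncard : ℚ) = n) : s.ncard * m = t.ncard * n := by
  classical
  have habove (a) : (ht.toFinset.bipartiteAbove r a : Set β) = {b | b ∈ t ∧ r a b} := by ext; simp
  have hbelow (b) : (hs.toFinset.bipartiteBelow r b : Set α) = {a | a ∈ s ∧ r a b} := by ext; simp
  have hcount := sum_card_bipartiteAbove_eq_sum_card_bipartiteBelow r
    (s := hs.toFinset) (t := ht.toFinset)
  simp only [← Set.ncard_coe_finset, habove, hbelow] at hcount
  rw [Set.ncard_eq_toFinset_card s hs, Set.ncard_eq_toFinset_card t ht, ← nsmul_eq_mul,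
    ← nsmul_eq_mul, ← sum_const, ← sum_const]
  calc ∑ _a ∈ hs.toFinset, m = ∑ a ∈ hs.toFinset, ({b | b ∈ t ∧ r a b}.ncard : ℚ) :=
        sum_congr rfl fun a ha ↦ (hm a (hs.mem_toFinset.1 ha)).symm
    _ = ∑ b ∈ ht.toFinset, ({a | a ∈ s ∧ r a b}.ncard : ℚ) := by exact_mod_cast hcount
    _ = ∑ _b ∈ ht.toFinset, n := sum_congr rfl fun b hb ↦ hn b (ht.mem_toFinset.1 hb)

lemma ncard_le_mul_of_subset_biUnion {ι α : Type*} [Finite α] {s : Set α} {I : Set ι}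
    (hI : I.Finite) {A : ι → Set α} {c : ℚ} (hs : s ⊆ ⋃ i ∈ I, A i)
    (hc : ∀ i ∈ I, ((A i).ncard : ℚ) ≤ c) : (s.ncard : ℚ) ≤ I.ncard * c := by
  have hsum : s.ncard ≤ ∑ i ∈ hI.toFinset, (A i).ncard := calc
    s.ncard ≤ (⋃ i ∈ hI.toFinset, A i).ncard :=
      Set.ncard_le_ncard (by simpa using hs) (Set.toFinite _)
    _ ≤ ∑ i ∈ hI.toFinset, (A i).ncard := hI.toFinset.set_ncard_biUnion_le A
  calc (s.ncard : ℚ) ≤ ∑ i ∈ hI.toFinset, ((A i).ncard : ℚ) := by exact_mod_cast hsum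
    _ ≤ hI.toFinset.card • c := sum_le_card_nsmul _ _ _ fun i hi ↦ hc i (hI.mem_toFinset.1 hi)
    _ = I.ncard * c := by rw [nsmul_eq_mul, Set.ncard_eq_toFinset_card I hI]

lemma card_mul_le_ncard_biUnion_add {ι α : Type*} [Finite α] {A : ι → Set α} {b c : ℚ}
    (hc0 : 0 ≤ c) (I : Finset ι) (hb : ∀ i ∈ I, b ≤ (A i).ncard)
    (hc : ∀ i ∈ I, ∀ j ∈ I, i ≠ j → ((A i ∩ A j).ncard : ℚ) ≤ c) :
    #I * b ≤ (⋃ i ∈ I, A i).ncard + (#I : ℚ) ^ 2 * c := by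
  classical
  induction I using Finset.induction_on with
  | empty => simp
  | insert i s hi ih =>
    have ih' := ih (fun j hj ↦ hb j (mem_insert_of_mem hj))
      fun j hj k hk ↦ hc j (mem_insert_of_mem hj) k (mem_insert_of_mem hk)
    have hinter : ((A i ∩ ⋃ j ∈ s, A j).ncard : ℚ) ≤ #s * c := by
      rw [← Set.ncard_coe_finset s]
      refine ncard_le_mul_of_subset_biUnion s.finite_toSet (A := fun j ↦ A i ∩ A j)
        (by simp [Set.inter_iUnion₂]) fun j hj ↦ ?_
      exact hc i (mem_insert_self i s) j (mem_insert_of_mem hj) (by rintro rfl; exact hi hj)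
    have hunion : ((A i ∪ ⋃ j ∈ s, A j).ncard : ℚ) + (A i ∩ ⋃ j ∈ s, A j).ncard =
        (A i).ncard + (⋃ j ∈ s, A j).ncard := by
      exact_mod_cast Set.ncard_union_add_ncard_inter (A i) (⋃ j ∈ s, A j)
    rw [set_biUnion_insert, card_insert_of_notMem hi]
    push_cast
    linarith [hb i (mem_insert_self i s), mul_nonneg (Nat.cast_nonneg (α := ℚ) #s) hc0]

end FiniteCounting

section UpperCovers

/-- The subspaces of `W` that cover `A`, i.e. the points of the projective space of `W / A` when
`A ≤ W`. -/
def upperCovers (A W : Submodule K V) : Set (Submodule K V) := {B | A ⋖ B ∧ B ≤ W}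

lemma exists_sup_span_singleton_eq_of_covBy {A B : Submodule K V} (h : A ⋖ B) :
    ∃ v ∉ A, A ⊔ K ∙ v = B := by
  obtain ⟨v, hvB, hvA⟩ := SetLike.exists_of_lt h.lt
  refine ⟨v, hvA, (h.eq_or_eq le_sup_left (sup_le h.le (by simpa))).resolve_left ?_⟩
  simpa using hvA

lemma covBy_sup_span_singleton {A : Submodule K V} {v : V} (hv : v ∉ A) : A ⋖ A ⊔ K ∙ v := by
  rw [sup_comm]
  exact Submodule.covBy_span_singleton_sup hv

lemma exists_mem_upperCovers_le {A W F : Submodule K V} (hAW : A ≤ W) (hAF : A ≤ F)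
    (h : ¬ W ⊓ F ≤ A) : ∃ B ∈ upperCovers A W, B ≤ F := by
  obtain ⟨v, ⟨hvW, hvF⟩, hvA⟩ := SetLike.not_le_iff_exists.1 h
  exact ⟨A ⊔ K ∙ v, ⟨covBy_sup_span_singleton hvA, sup_le hAW (by simpa)⟩, sup_le hAF (by simpa)⟩

variable [FiniteDimensional K V]

lemma finrank_eq_add_one_of_covBy {A B : Submodule K V} (h : A ⋖ B) :
    finrank K B = finrank K A + 1 := by
  obtain ⟨v, hv, rfl⟩ := exists_sup_span_singleton_eq_of_covBy h
  exact Submodule.finrank_sup_span_singleton hv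

lemma finrank_sup_of_covBy_of_ne {A B B' : Submodule K V} (h : A ⋖ B) (h' : A ⋖ B')
    (hne : B ≠ B') : finrank K ↥(B ⊔ B') = finrank K A + 2 := by
  have hinf : B ⊓ B' = A := (h.eq_or_eq (le_inf h.le h'.le) inf_le_left).resolve_right fun hBB' ↦
    (h'.eq_or_eq h.le (inf_eq_left.1 hBB')).elim h.ne' hne
  have hdim := Submodule.finrank_sup_add_finrank_inf_eq B B'
  rw [hinf, finrank_eq_add_one_of_covBy h, finrank_eq_add_one_of_covBy h'] at hdim
  omega

lemma finrank_sup_add_finrank_inf_of_le {A B C : Submodule K V} (h : A ≤ B) :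
    finrank K ↥(A ⊔ B ⊓ C) + finrank K ↥(A ⊓ C) = finrank K A + finrank K ↥(B ⊓ C) := by
  rw [← Submodule.finrank_sup_add_finrank_inf_eq A (B ⊓ C), ← inf_assoc, inf_eq_left.2 h]

lemma finrank_inf_lt_of_not_le {A B : Submodule K V} (h : ¬ A ≤ B) :
    finrank K ↥(A ⊓ B) < finrank K A :=
  Submodule.finrank_lt_finrank_of_lt (inf_lt_left.2 h)

lemma le_of_finrank_le_finrank_inf {A B : Submodule K V} (h : finrank K A ≤ finrank K ↥(A ⊓ B)) :
    A ≤ B :=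
  inf_eq_left.1 (Submodule.eq_of_le_of_finrank_le inf_le_left h)

lemma not_inf_le_of_finrank_le {T F G : Submodule K V} (h : finrank K T ≤ finrank K ↥(F ⊓ G))
    (hTG : ¬ T ≤ G) : ¬ F ⊓ G ≤ T := fun hle ↦
  hTG ((Submodule.eq_of_le_of_finrank_le hle h).ge.trans inf_le_right)

lemma exists_mem_upperCovers_sup_le {T F G : Submodule K V} (hTF : T ≤ F)
    (h : finrank K T ≤ finrank K ↥(F ⊓ G)) (hTG : ¬ T ≤ G) : ∃ H ∈ upperCovers T (T ⊔ G), H ≤ F :=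
  exists_mem_upperCovers_le le_sup_left hTF fun hle ↦ not_inf_le_of_finrank_le h hTG
    ((le_inf (inf_le_right.trans le_sup_right) inf_le_left).trans hle)

lemma finrank_map_mkQ_add_finrank {A W : Submodule K V} (h : A ≤ W) :
    finrank K (W.map A.mkQ) + finrank K A = finrank K W := by
  rw [← (A.mkQ.domRestrict W).finrank_range_add_finrank_ker, LinearMap.range_domRestrict,
    LinearMap.ker_domRestrict, Submodule.ker_mkQ, (Submodule.comapSubtypeEquivOfLe h).finrank_eq]

variable [Finite K]

lemma two_le_natCard (K : Type*) [Field K] [Finite K] : 2 ≤ Nat.card K := Finite.one_lt_card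

lemma finite_submodule (K V : Type*) [Field K] [AddCommGroup V] [Module K V]
    [FiniteDimensional K V] [Finite K] : Finite (Submodule K V) :=
  have : Finite V := Module.finite_of_finite K
  inferInstance

lemma ncard_upperCovers {A W : Submodule K V} (h : A ≤ W) :
    (upperCovers A W).ncard = qNumber (Nat.card K) (finrank K W - finrank K A) := by
  let lift : Projectivization K (W.map A.mkQ) → Submodule K V :=
    fun x ↦ (x.submodule.map (W.map A.mkQ).subtype).comap A.mkQ
  have hlift_mk (v : V) (hv : A.mkQ v ∈ W.map A.mkQ) (hv0 : (⟨A.mkQ v, hv⟩ : W.map A.mkQ) ≠ 0) :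
      lift (.mk K ⟨A.mkQ v, hv⟩ hv0) = A ⊔ K ∙ v := by
    rw [← Submodule.comap_map_mkQ]
    simp [lift, Submodule.map_span]
  have hrange : upperCovers A W = Set.range lift := by
    ext B
    constructor
    · rintro ⟨hAB, hBW⟩
      obtain ⟨v, hvA, rfl⟩ := exists_sup_span_singleton_eq_of_covBy hAB
      have hvW : v ∈ W := hBW (Submodule.mem_sup_right (Submodule.mem_span_singleton_self v))
      exact ⟨_, hlift_mk v (Submodule.mem_map_of_mem hvW) (by simpa using hvA)⟩
    · rintro ⟨x, rfl⟩
      induction x with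
      | h w hw =>
        obtain ⟨w, hwW⟩ := w
        obtain ⟨v, hvW, rfl⟩ := Submodule.mem_map.1 hwW
        rw [hlift_mk]
        exact ⟨covBy_sup_span_singleton (by simpa using hw), sup_le h (by simpa using hvW)⟩
  have hinj : Function.Injective lift :=
    (Submodule.comap_injective_of_surjective A.mkQ_surjective).comp
      ((Submodule.map_injective_of_injective (Submodule.subtype_injective _)).comp
        Projectivization.submodule_injective)
  have hfinrank : finrank K (W.map A.mkQ) = finrank K W - finrank K A :=
    Nat.eq_sub_of_add_eq (finrank_map_mkQ_add_finrank h)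
  rw [hrange, ← Set.image_univ, Set.ncard_image_of_injective _ hinj, Set.ncard_univ,
    Projectivization.card_of_finrank K _ hfinrank, qNumber]

lemma ncard_hyperplanes_le (M : Submodule K V) :
    {U : Submodule K V | U ≤ M ∧ finrank K U + 1 = finrank K M}.ncard
      ≤ Nat.card K ^ finrank K M := by
  have : Finite V := Module.finite_of_finite K
  have : Finite (Dual K M) := Module.finite_of_finite K
  have hcard : (Set.univ : Set (Dual K M)).ncard = Nat.card K ^ finrank K M := by
    rw [Set.ncard_univ, Module.natCard_eq_pow_finrank (K := K), Subspace.dual_finrank_eq]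
  rw [← hcard]
  refine (Set.ncard_le_ncard ?_ (Set.toFinite _)).trans
    (Set.ncard_image_le (f := fun φ : Dual K M ↦ (LinearMap.ker φ).map M.subtype) Set.finite_univ)
  rintro U ⟨hUM, hU⟩
  have hlt : U.comap M.subtype < ⊤ := by
    rw [lt_top_iff_ne_top, ne_eq, Submodule.comap_subtype_eq_top]
    intro hMU
    rw [hUM.antisymm hMU] at hU
    omega
  obtain ⟨φ, hφ, hle⟩ := Submodule.exists_le_ker_of_lt_top _ hlt
  refine ⟨φ, trivial, (Submodule.eq_of_le_of_finrank_le ?_ ?_).symm⟩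
  · exact fun x hx ↦ ⟨⟨x, hUM hx⟩, hle hx, rfl⟩
  · have := Module.Dual.finrank_ker_add_one_of_ne_zero hφ
    rw [Submodule.finrank_map_subtype_eq]
    omega

end UpperCovers

section TotallyIsotropic

variable {f : LinearMap.BilinForm K V} {A B : Submodule K V}

lemma TotallyIsotropic.mono (hB : TotallyIsotropic f B) (h : A ≤ B) : TotallyIsotropic f A :=
  fun x hx y hy ↦ hB x (h hx) y (h hy)

lemma TotallyIsotropic.le_orthogonal (hA : TotallyIsotropic f A) : A ≤ f.orthogonal A :=
  fun y hy x hx ↦ hA x hx y hy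

lemma TotallyIsotropic.sup (hf : f.IsRefl) (hA : TotallyIsotropic f A)
    (hB : TotallyIsotropic f B) (h : B ≤ f.orthogonal A) : TotallyIsotropic f (A ⊔ B) := by
  intro x hx y hy
  obtain ⟨a, ha, b, hb, rfl⟩ := Submodule.mem_sup.1 hx
  obtain ⟨a', ha', b', hb', rfl⟩ := Submodule.mem_sup.1 hy
  simp [hA a ha a' ha', hB b hb b' hb', h hb' a ha, hf _ _ (h hb a' ha')]

lemma totallyIsotropic_span_singleton (hf : f.IsAlt) (v : V) : TotallyIsotropic f (K ∙ v) := by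
  intro x hx y hy
  obtain ⟨c, rfl⟩ := Submodule.mem_span_singleton.1 hx
  obtain ⟨d, rfl⟩ := Submodule.mem_span_singleton.1 hy
  simp [hf v]

lemma TotallyIsotropic.of_mem_upperCovers (hf : f.IsAlt) (hA : TotallyIsotropic f A)
    (hB : B ∈ upperCovers A (f.orthogonal A)) : TotallyIsotropic f B := by
  obtain ⟨v, -, rfl⟩ := exists_sup_span_singleton_eq_of_covBy hB.1
  exact hA.sup hf.isRefl (totallyIsotropic_span_singleton hf v) (le_sup_right.trans hB.2)

end TotallyIsotropic

/-- `f` is a nondegenerate alternating form on a space of dimension `2 * ν`. -/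
structure IsSymplecticForm (f : LinearMap.BilinForm K V) (ν : ℕ) : Prop where
  isAlt : f.IsAlt
  nondegenerate : f.Nondegenerate
  finrank_eq : finrank K V = 2 * ν

namespace IsSymplecticForm

variable [FiniteDimensional K V] {f : LinearMap.BilinForm K V} {ν : ℕ}

lemma finrank_orthogonal (hf : IsSymplecticForm f ν) (A : Submodule K V) :
    finrank K (f.orthogonal A) = 2 * ν - finrank K A := by
  rw [LinearMap.BilinForm.finrank_orthogonal hf.nondegenerate, hf.finrank_eq]

lemma exists_mem_polar_inf_le (hf : IsSymplecticForm f ν) {T S : Submodule K V} {n : ℕ}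
    (hT : TotallyIsotropic f T) (hTn : finrank K T ≤ n) (hn : 2 * n + finrank K S ≤ 2 * ν) :
    ∃ F ∈ polar f n, T ≤ F ∧ F ⊓ S ≤ T := by
  induction n, hTn using Nat.le_induction with
  | base => exact ⟨T, ⟨hT, rfl⟩, le_rfl, inf_le_left⟩
  | succ n _ ih =>
    obtain ⟨F, ⟨hF, hFn⟩, hTF, hFS⟩ := ih (by omega)
    have hnle : ¬ f.orthogonal F ≤ F ⊔ S := fun hle ↦ by
      have := Submodule.finrank_mono hle
      have := Submodule.finrank_add_le_finrank_add_finrank F S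
      have := hf.finrank_orthogonal F
      omega
    obtain ⟨v, hvF, hv⟩ := SetLike.not_le_iff_exists.1 hnle
    have hcov : F ⋖ F ⊔ K ∙ v := covBy_sup_span_singleton fun h ↦ hv (Submodule.mem_sup_left h)
    have hinf : (F ⊔ K ∙ v) ⊓ (F ⊔ S) = F := by
      refine (hcov.eq_or_eq (le_inf le_sup_left le_sup_left) inf_le_left).resolve_right fun heq ↦ ?_
      exact hv (inf_eq_left.1 heq (Submodule.mem_sup_right (Submodule.mem_span_singleton_self v)))
    refine ⟨F ⊔ K ∙ v, ⟨?_, by rw [finrank_eq_add_one_of_covBy hcov, hFn]⟩,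
      hTF.trans le_sup_left, ?_⟩
    · exact hF.of_mem_upperCovers hf.isAlt ⟨hcov, sup_le hF.le_orthogonal (by simpa using hvF)⟩
    · refine le_trans (le_inf ?_ inf_le_right) hFS
      exact (inf_le_inf_left _ le_sup_right).trans hinf.le

variable [Finite K]

lemma ncard_C3_mul_qNumber (hf : IsSymplecticForm f ν) {A : Submodule K V} {m : ℕ} {c : ℚ}
    (hA : TotallyIsotropic f A)
    (hc : ∀ B ∈ upperCovers A (f.orthogonal A), ((C3 f B m).ncard : ℚ) = c) :
    ((C3 f A m).ncard : ℚ) * qNumber (Nat.card K) (m - finrank K A) =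
      qNumber (Nat.card K) (2 * ν - 2 * finrank K A) * c := by
  have := finite_submodule K V
  have hcount := ncard_mul_eq_ncard_mul (fun F B : Submodule K V ↦ B ≤ F)
    (s := C3 f A m) (t := upperCovers A (f.orthogonal A)) (Set.toFinite _) (Set.toFinite _)
    (m := qNumber (Nat.card K) (m - finrank K A)) (n := c) ?_ ?_
  · rw [hcount, ncard_upperCovers hA.le_orthogonal, hf.finrank_orthogonal, Nat.sub_sub,
      ← two_mul]
  · rintro F ⟨⟨hF, rfl⟩, hAF⟩
    rw [← ncard_upperCovers hAF]
    congr 2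
    ext B
    exact ⟨fun ⟨⟨hAB, _⟩, hBF⟩ ↦ ⟨hAB, hBF⟩, fun ⟨hAB, hBF⟩ ↦
      ⟨⟨hAB, hBF.trans (hF.le_orthogonal.trans (f.orthogonal_le hAF))⟩, hBF⟩⟩
  · intro B hB
    rw [← hc B hB]
    congr 2
    ext F
    exact ⟨fun ⟨hF, hBF⟩ ↦ ⟨hF.1, hBF⟩, fun ⟨hF, hBF⟩ ↦ ⟨⟨hF, hB.1.le.trans hBF⟩, hBF⟩⟩

lemma ncard_C3 (hf : IsSymplecticForm f ν) {A : Submodule K V} {m a : ℕ} (hm : m ≤ ν)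
    (hA : A ∈ polar f a) (ha : a ≤ m) :
    ((C3 f A m).ncard : ℚ) = isotropicCount (Nat.card K) ν m a := by
  have hq := two_le_natCard K
  induction ha using Nat.decreasingInduction generalizing A with
  | self =>
    have hsingle : C3 f A m = {A} := by
      ext F
      refine ⟨fun hF ↦ (Submodule.eq_of_le_of_finrank_eq hF.2 ?_).symm, ?_⟩
      · rw [hA.2, hF.1.2]
      · rintro rfl
        exact ⟨hA, le_rfl⟩
    rw [hsingle, isotropicCount_self, Set.ncard_singleton, Nat.cast_one]
  | @of_succ a ha ih =>
    have hcount := hf.ncard_C3_mul_qNumber (m := m) hA.1 fun B hB ↦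
      ih ⟨hA.1.of_mem_upperCovers hf.isAlt hB, by rw [finrank_eq_add_one_of_covBy hB.1, hA.2]⟩
    rw [hA.2] at hcount
    refine mul_right_cancel₀ (pow_sub_one_pos (n := m - a) hq (by omega)).ne' ?_
    rw [isotropicCount_mul_pow_sub_one hq hm ha, ← qNumber_mul_sub_one, ← qNumber_mul_sub_one,
      ← mul_assoc, hcount]
    ring

lemma ncard_C3_le (hf : IsSymplecticForm f ν) {m : ℕ} (hm : m ≤ ν) (A : Submodule K V) :
    ((C3 f A m).ncard : ℚ) ≤ isotropicCount (Nat.card K) ν m (finrank K A) := by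
  rcases (C3 f A m).eq_empty_or_nonempty with hempty | ⟨F, ⟨hF, rfl⟩, hAF⟩
  · rw [hempty, Set.ncard_empty, Nat.cast_zero]
    exact isotropicCount_nonneg (two_le_natCard K) hm _
  · exact (hf.ncard_C3 hm ⟨hF.mono hAF, rfl⟩ (Submodule.finrank_mono hAF)).le

lemma ncard_le_of_forall_exists_upperCovers_le (hf : IsSymplecticForm f ν) {m n : ℕ}
    (hm : m ≤ ν) {𝒢 : Set (Submodule K V)} (h𝒢 : 𝒢 ⊆ polar f m) {A U W : Submodule K V}
    (hAW : A ≤ W) (hn : ∀ B ∈ upperCovers A W, finrank K ↥(U ⊔ B) = n)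
    (hU : ∀ F ∈ 𝒢, U ≤ F) (hB : ∀ F ∈ 𝒢, ∃ B ∈ upperCovers A W, B ≤ F) :
    (𝒢.ncard : ℚ) ≤ qNumber (Nat.card K) (finrank K W - finrank K A) *
      isotropicCount (Nat.card K) ν m n := by
  have := finite_submodule K V
  rw [← ncard_upperCovers hAW]
  refine ncard_le_mul_of_subset_biUnion (Set.toFinite _) (A := fun B ↦ C3 f (U ⊔ B) m) ?_ ?_
  · intro F hF
    obtain ⟨B, hBcov, hBF⟩ := hB F hF
    exact Set.mem_biUnion hBcov ⟨h𝒢 hF, sup_le (hU F hF) hBF⟩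
  · intro B hBcov
    exact hn B hBcov ▸ hf.ncard_C3_le hm (U ⊔ B)

lemma qNumber_mul_le_ncard_C1_add (hf : IsSymplecticForm f ν) {m t : ℕ} (hm : m ≤ ν)
    (htm : t + 1 ≤ m) {M T : Submodule K V} (hM : TotallyIsotropic f M) (hTM : T ≤ M)
    (hT : finrank K T = t) :
    (qNumber (Nat.card K) (finrank K M - t) : ℚ) * isotropicCount (Nat.card K) ν m (t + 1) ≤
      (C1 f M T m t).ncard + (qNumber (Nat.card K) (finrank K M - t) : ℚ) ^ 2 *
        isotropicCount (Nat.card K) ν m (t + 2) := by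
  have := finite_submodule K V
  have hfin : (upperCovers T M).Finite := Set.toFinite _
  have hfinrank (H) (hH : H ∈ upperCovers T M) : finrank K H = t + 1 := by
    rw [finrank_eq_add_one_of_covBy hH.1, hT]
  have hbonf := card_mul_le_ncard_biUnion_add (A := fun H ↦ C3 f H m)
    (b := isotropicCount (Nat.card K) ν m (t + 1)) (c := isotropicCount (Nat.card K) ν m (t + 2))
    (isotropicCount_nonneg (two_le_natCard K) hm _) hfin.toFinset ?_ ?_
  · rw [← Set.ncard_eq_toFinset_card _ hfin, ncard_upperCovers hTM, hT] at hbonf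
    refine hbonf.trans ?_
    gcongr
    · exact Set.toFinite _
    refine Set.iUnion₂_subset fun H hH F hF ↦ ?_
    have hHcov := hfin.mem_toFinset.1 hH
    exact ⟨hF.1, hHcov.1.le.trans hF.2,
      (hfinrank H hHcov).ge.trans (Submodule.finrank_mono (le_inf hF.2 hHcov.2))⟩
  · intro H hH
    have hHcov := hfin.mem_toFinset.1 hH
    exact (hf.ncard_C3 hm ⟨hM.mono hHcov.2, hfinrank H hHcov⟩ htm).ge
  · intro H hH H' hH' hne
    have hinter : C3 f H m ∩ C3 f H' m = C3 f (H ⊔ H') m := by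
      ext F
      simp only [C3, Set.mem_inter_iff, Set.mem_ofPred_eq, sup_le_iff]
      tauto
    rw [hinter, ← hT, ← finrank_sup_of_covBy_of_ne (hfin.mem_toFinset.1 hH).1
      (hfin.mem_toFinset.1 hH').1 hne]
    exact hf.ncard_C3_le hm _

end IsSymplecticForm

section Families

/-- Every member of `ℱ₁` meets every member of `ℱ₂` in dimension at least `t`. -/
def CrossIntersecting (t : ℕ) (ℱ₁ ℱ₂ : Set (Submodule K V)) : Prop :=
  ∀ F₁ ∈ ℱ₁, ∀ F₂ ∈ ℱ₂, t ≤ finrank K ↥(F₁ ⊓ F₂)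

/-- `(ℱ₁, ℱ₂)` is a maximal pair of cross `t`-intersecting families in `𝒫_{m₁}` and `𝒫_{m₂}`. -/
structure IsMaximalCross (f : LinearMap.BilinForm K V) (m₁ m₂ t : ℕ)
    (ℱ₁ ℱ₂ : Set (Submodule K V)) : Prop where
  subset_left : ℱ₁ ⊆ polar f m₁
  subset_right : ℱ₂ ⊆ polar f m₂
  crossIntersecting : CrossIntersecting t ℱ₁ ℱ₂
  maximal : ∀ 𝒢₁ 𝒢₂ : Set (Submodule K V), 𝒢₁ ⊆ polar f m₁ → 𝒢₂ ⊆ polar f m₂ →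
    CrossIntersecting t 𝒢₁ 𝒢₂ → ℱ₁ ⊆ 𝒢₁ → ℱ₂ ⊆ 𝒢₂ → 𝒢₁ = ℱ₁ ∧ 𝒢₂ = ℱ₂

/-- A `t`-dimensional `T` contained in every member of `ℱ₁` but not of `ℱ₂`, together with a
`(t + 1)`-dimensional `t`-cover `S ≥ T` of `ℱ₂`. These are the minimum covers of a maximal
pair with `(τ_t(ℱ₁), τ_t(ℱ₂)) = (t, t + 1)`. -/
structure IsCoverPair (f : LinearMap.BilinForm K V) (t : ℕ) (ℱ₁ ℱ₂ : Set (Submodule K V))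
    (T S : Submodule K V) : Prop where
  finrank_left : finrank K T = t
  finrank_right : finrank K S = t + 1
  le : T ≤ S
  le_of_mem : ∀ F ∈ ℱ₁, T ≤ F
  exists_not_le : ∃ F ∈ ℱ₂, ¬ T ≤ F
  isTCover : IsTCover f t ℱ₂ S

/-- The join of all `(t + 1)`-dimensional `t`-covers of `ℱ` containing `T`. -/
def coverJoin (f : LinearMap.BilinForm K V) (t : ℕ) (ℱ : Set (Submodule K V))
    (T : Submodule K V) : Submodule K V :=
  sSup {H | T ≤ H ∧ finrank K H = t + 1 ∧ IsTCover f t ℱ H}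

variable {f : LinearMap.BilinForm K V} {ν m₁ m₂ t : ℕ} {ℱ₁ ℱ₂ : Set (Submodule K V)}
  {M T S F : Submodule K V}

lemma exists_isTCover_of_tauCover_eq {n : ℕ} (hn : 0 < n) (h : tauCover f t ℱ₁ = n) :
    ∃ X, IsTCover f t ℱ₁ X ∧ finrank K X = n := by
  have hne : {x | ∃ X, IsTCover f t ℱ₁ X ∧ finrank K X = x}.Nonempty :=
    Nat.nonempty_of_pos_sInf (hn.trans_eq h.symm)
  exact h ▸ Nat.sInf_mem hne

lemma IsMaximalCross.mem_right (h : IsMaximalCross f m₁ m₂ t ℱ₁ ℱ₂) (hF : F ∈ polar f m₂)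
    (hcross : ∀ F₁ ∈ ℱ₁, t ≤ finrank K ↥(F₁ ⊓ F)) : F ∈ ℱ₂ := by
  have hinsert : CrossIntersecting t ℱ₁ (insert F ℱ₂) := by
    rintro F₁ hF₁ F₂ (rfl | hF₂)
    · exact hcross F₁ hF₁
    · exact h.crossIntersecting F₁ hF₁ F₂ hF₂
  rw [← (h.maximal ℱ₁ _ h.subset_left (Set.insert_subset hF h.subset_right) hinsert subset_rfl
    (Set.subset_insert F ℱ₂)).2]
  exact Set.mem_insert F ℱ₂

lemma IsCoverPair.right_le_coverJoin (hp : IsCoverPair f t ℱ₁ ℱ₂ T S) : S ≤ coverJoin f t ℱ₂ T :=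
  le_sSup ⟨hp.le, hp.finrank_right, hp.isTCover⟩

lemma IsCoverPair.left_le_coverJoin (hp : IsCoverPair f t ℱ₁ ℱ₂ T S) : T ≤ coverJoin f t ℱ₂ T :=
  hp.le.trans hp.right_le_coverJoin

variable [FiniteDimensional K V]

lemma crossIntersecting_C1_C2 (hM : finrank K M = m₂ + 1) (hT : finrank K T = t) :
    CrossIntersecting t (C1 f M T m₁ t) (C2 f M T m₂) := by
  rintro F₁ ⟨-, hTF₁, hF₁M⟩ F₂ (⟨-, hTF₂⟩ | ⟨⟨-, hF₂⟩, hF₂M⟩)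
  · exact hT ▸ Submodule.finrank_mono (le_inf hTF₁ hTF₂)
  · have hdim := Submodule.finrank_sup_add_finrank_inf_eq (F₁ ⊓ M) F₂
    have hsup := Submodule.finrank_mono (sup_le (inf_le_right : F₁ ⊓ M ≤ M) hF₂M)
    have hinf := Submodule.finrank_mono (inf_le_inf_right F₂ (inf_le_left : F₁ ⊓ M ≤ F₁))
    omega

lemma crossIntersecting_C3_C4 : CrossIntersecting t (C3 f S m₁) (C4 f S m₂ t) := by
  rintro F₁ ⟨-, hSF₁⟩ F₂ ⟨-, hF₂⟩
  exact hF₂.trans (Submodule.finrank_mono (le_inf (inf_le_right.trans hSF₁) inf_le_left))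

lemma IsMaximalCross.exists_isCoverPair (hf : IsSymplecticForm f ν)
    (h : IsMaximalCross f m₁ m₂ t ℱ₁ ℱ₂) (ht : 0 < t) (htm : t ≤ m₂)
    (hdim : 2 * m₂ + t + 1 ≤ 2 * ν)
    (htau₁ : tauCover f t ℱ₁ = t) (htau₂ : tauCover f t ℱ₂ = t + 1) :
    ∃ T S, IsCoverPair f t ℱ₁ ℱ₂ T S := by
  obtain ⟨T, hTcov, hT⟩ := exists_isTCover_of_tauCover_eq ht htau₁
  obtain ⟨S, hScov, hS⟩ := exists_isTCover_of_tauCover_eq t.succ_pos htau₂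
  have hTF (F) (hF : F ∈ ℱ₁) : T ≤ F := le_of_finrank_le_finrank_inf (hT ▸ hTcov.2 F hF)
  have hTS : T ≤ S := by
    obtain ⟨F, hF, hTF₂, hFS⟩ :=
      hf.exists_mem_polar_inf_le (S := S) (n := m₂) hTcov.1 (by omega) (by omega)
    have hFmem : F ∈ ℱ₂ := h.mem_right hF fun F₁ hF₁ ↦
      hT ▸ Submodule.finrank_mono (le_inf (hTF F₁ hF₁) hTF₂)
    rw [inf_comm] at hFS
    have hTeq := Submodule.eq_of_le_of_finrank_le hFS (hT ▸ hScov.2 F hFmem)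
    exact hTeq.ge.trans inf_le_left
  have hexists : ∃ F ∈ ℱ₂, ¬ T ≤ F := by
    by_contra! hall
    have hle : tauCover f t ℱ₂ ≤ t := Nat.sInf_le ⟨T, ⟨hTcov.1, fun F hF ↦ ?_⟩, hT⟩
    · omega
    · rw [inf_eq_left.2 (hall F hF), hT]
  exact ⟨T, S, hT, hS, hTS, hTF, hexists, hScov⟩

namespace IsCoverPair

lemma finrank_inf_add_one (hp : IsCoverPair f t ℱ₁ ℱ₂ T S) (hF : F ∈ ℱ₂) (hTF : ¬ T ≤ F) :
    finrank K ↥(T ⊓ F) + 1 = t := by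
  have hcover := hp.isTCover.2 F hF
  have hdim := finrank_sup_add_finrank_inf_of_le (C := F) hp.le
  have hsup := Submodule.finrank_mono (sup_le hp.le (inf_le_left : S ⊓ F ≤ S))
  have hlt := finrank_inf_lt_of_not_le hTF
  have := hp.finrank_left
  have := hp.finrank_right
  omega

lemma finrank_sup (hp : IsCoverPair f t ℱ₁ ℱ₂ T S) (hF : F ∈ ℱ₂) (hTF : ¬ T ≤ F) :
    finrank K ↥(T ⊔ F) = finrank K F + 1 := by
  have := Submodule.finrank_sup_add_finrank_inf_eq T F
  have := hp.finrank_inf_add_one hF hTF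
  have := hp.finrank_left
  omega

lemma coverJoin_le_sup (hp : IsCoverPair f t ℱ₁ ℱ₂ T S) (hF : F ∈ ℱ₂) (hTF : ¬ T ≤ F) :
    coverJoin f t ℱ₂ T ≤ T ⊔ F := by
  refine sSup_le fun H ⟨hTH, hH, hHcov⟩ ↦ ?_
  have hHeq : T ⊔ H ⊓ F = H := by
    refine Submodule.eq_of_le_of_finrank_le (sup_le hTH inf_le_left) ?_
    have hcover := hHcov.2 F hF
    have hdim := finrank_sup_add_finrank_inf_of_le (C := F) hTH
    have := hp.finrank_inf_add_one hF hTF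
    have := hp.finrank_left
    omega
  exact hHeq.ge.trans (sup_le_sup_left inf_le_right T)

lemma sup_coverJoin_inf (hp : IsCoverPair f t ℱ₁ ℱ₂ T S) (hF : F ∈ ℱ₂) (hTF : ¬ T ≤ F) :
    T ⊔ coverJoin f t ℱ₂ T ⊓ F = coverJoin f t ℱ₂ T := by
  rw [inf_comm, ← sup_inf_assoc_of_le F hp.left_le_coverJoin]
  exact inf_eq_right.2 (hp.coverJoin_le_sup hF hTF)

lemma finrank_coverJoin_inf_add_one (hp : IsCoverPair f t ℱ₁ ℱ₂ T S) (hF : F ∈ ℱ₂)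
    (hTF : ¬ T ≤ F) :
    finrank K ↥(coverJoin f t ℱ₂ T ⊓ F) + 1 = finrank K (coverJoin f t ℱ₂ T) := by
  have hdim := finrank_sup_add_finrank_inf_of_le (C := F) hp.left_le_coverJoin
  rw [hp.sup_coverJoin_inf hF hTF] at hdim
  have := hp.finrank_inf_add_one hF hTF
  have := hp.finrank_left
  omega

lemma totallyIsotropic_coverJoin (hp : IsCoverPair f t ℱ₁ ℱ₂ T S) (hf : f.IsRefl)
    (hℱ₂ : ℱ₂ ⊆ polar f m₂) : TotallyIsotropic f (coverJoin f t ℱ₂ T) := by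
  obtain ⟨F₀, hF₀, hTF₀⟩ := hp.exists_not_le
  rw [← hp.sup_coverJoin_inf hF₀ hTF₀]
  refine (hp.isTCover.1.mono hp.le).sup hf ((hℱ₂ hF₀).1.mono inf_le_right) (inf_le_left.trans ?_)
  exact sSup_le fun H ⟨hTH, _, hH, _⟩ ↦ hH.le_orthogonal.trans (f.orthogonal_le hTH)

lemma finrank_coverJoin_le (hp : IsCoverPair f t ℱ₁ ℱ₂ T S) (hℱ₂ : ℱ₂ ⊆ polar f m₂) :
    finrank K (coverJoin f t ℱ₂ T) ≤ m₂ + 1 := by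
  obtain ⟨F₀, hF₀, hTF₀⟩ := hp.exists_not_le
  rw [← (hℱ₂ hF₀).2, ← hp.finrank_sup hF₀ hTF₀]
  exact Submodule.finrank_mono (hp.coverJoin_le_sup hF₀ hTF₀)

lemma eq_C1_and_eq_C2 (hp : IsCoverPair f t ℱ₁ ℱ₂ T S) (h : IsMaximalCross f m₁ m₂ t ℱ₁ ℱ₂)
    (hM : finrank K (coverJoin f t ℱ₂ T) = m₂ + 1) :
    ℱ₁ = C1 f (coverJoin f t ℱ₂ T) T m₁ t ∧ ℱ₂ = C2 f (coverJoin f t ℱ₂ T) T m₂ := by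
  have hle (F) (hF : F ∈ ℱ₂) (hTF : ¬ T ≤ F) : F ≤ coverJoin f t ℱ₂ T := by
    refine le_of_finrank_le_finrank_inf ?_
    have := hp.finrank_coverJoin_inf_add_one hF hTF
    rw [inf_comm, (h.subset_right hF).2]
    omega
  have hleft : ℱ₁ ⊆ C1 f (coverJoin f t ℱ₂ T) T m₁ t := by
    intro F hF
    obtain ⟨F₀, hF₀, hTF₀⟩ := hp.exists_not_le
    have hlt : T < F ⊓ coverJoin f t ℱ₂ T := by
      refine lt_of_le_not_ge (le_inf (hp.le_of_mem F hF) hp.left_le_coverJoin) fun hge ↦ ?_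
      exact not_inf_le_of_finrank_le (hp.finrank_left ▸ h.crossIntersecting F hF F₀ hF₀) hTF₀
        ((inf_le_inf_left F (hle F₀ hF₀ hTF₀)).trans hge)
    have hfinrank := Submodule.finrank_lt_finrank_of_lt hlt
    rw [hp.finrank_left] at hfinrank
    exact ⟨h.subset_left hF, hp.le_of_mem F hF, hfinrank⟩
  have hright : ℱ₂ ⊆ C2 f (coverJoin f t ℱ₂ T) T m₂ := fun F hF ↦
    (em (T ≤ F)).imp (⟨h.subset_right hF, ·⟩) fun hTF ↦ ⟨h.subset_right hF, hle F hF hTF⟩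
  exact (h.maximal _ _ (fun _ hF ↦ hF.1) (Set.union_subset (fun _ hF ↦ hF.1) fun _ hF ↦ hF.1)
    (crossIntersecting_C1_C2 hM hp.finrank_left) hleft hright).imp Eq.symm Eq.symm

lemma eq_C3_and_eq_C4 (hp : IsCoverPair f t ℱ₁ ℱ₂ T S) (h : IsMaximalCross f m₁ m₂ t ℱ₁ ℱ₂)
    (hS : ∀ F ∈ ℱ₁, S ≤ F) : ℱ₁ = C3 f S m₁ ∧ ℱ₂ = C4 f S m₂ t := by
  have hright : ℱ₂ ⊆ C4 f S m₂ t := fun F hF ↦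
    ⟨h.subset_right hF, inf_comm F S ▸ hp.isTCover.2 F hF⟩
  exact (h.maximal _ _ (fun _ hF ↦ hF.1) (fun _ hF ↦ hF.1) crossIntersecting_C3_C4
    (fun F hF ↦ ⟨h.subset_left hF, hS F hF⟩) hright).imp Eq.symm Eq.symm

end IsCoverPair

end Families

section Bounds

namespace IsCoverPair

variable [FiniteDimensional K V] [Finite K] {f : LinearMap.BilinForm K V} {ν m₁ m₂ t : ℕ}
  {ℱ₁ ℱ₂ : Set (Submodule K V)} {T S H : Submodule K V}

lemma ncard_setOf_le_of_not_isTCover (hp : IsCoverPair f t ℱ₁ ℱ₂ T S)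
    (hf : IsSymplecticForm f ν) (h : IsMaximalCross f m₁ m₂ t ℱ₁ ℱ₂) (hm₁ : m₁ ≤ ν)
    (hTH : T ⋖ H) (hH : ¬ IsTCover f t ℱ₂ H) :
    ({F | F ∈ ℱ₁ ∧ H ≤ F}.ncard : ℚ) ≤
      qNumber (Nat.card K) (m₂ + 1 - t) * isotropicCount (Nat.card K) ν m₁ (t + 2) := by
  rcases Set.eq_empty_or_nonempty {F | F ∈ ℱ₁ ∧ H ≤ F} with hempty | ⟨F, hF, hHF⟩
  · have := isotropicCount_nonneg (two_le_natCard K) hm₁ (t + 2)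
    rw [hempty, Set.ncard_empty, Nat.cast_zero]
    positivity
  obtain ⟨F₂, hF₂, hlt⟩ : ∃ F₂ ∈ ℱ₂, finrank K ↥(H ⊓ F₂) < t := by
    by_contra! hcover
    exact hH ⟨(h.subset_left hF).1.mono hHF, hcover⟩
  have hTF₂ : ¬ T ≤ F₂ := fun hle ↦ by
    have := Submodule.finrank_mono (le_inf hTH.le hle)
    have := hp.finrank_left
    omega
  have hHle : ¬ H ≤ T ⊔ F₂ := fun hle ↦ by
    have hHeq : T ⊔ H ⊓ F₂ = H := by
      rw [inf_comm, ← sup_inf_assoc_of_le F₂ hTH.le]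
      exact inf_eq_right.2 hle
    have hdim := finrank_sup_add_finrank_inf_of_le (C := F₂) hTH.le
    rw [hHeq, finrank_eq_add_one_of_covBy hTH] at hdim
    have := hp.finrank_inf_add_one hF₂ hTF₂
    omega
  rw [← (h.subset_right hF₂).2, ← hp.finrank_sup hF₂ hTF₂]
  nth_rw 1 [← hp.finrank_left]
  refine hf.ncard_le_of_forall_exists_upperCovers_le hm₁ (fun F hF ↦ h.subset_left hF.1)
    le_sup_left (fun H' hH' ↦ ?_) (fun F hF ↦ hF.2) fun F hF ↦ ?_
  · rw [← hp.finrank_left]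
    exact finrank_sup_of_covBy_of_ne hTH hH'.1 (by rintro rfl; exact hHle hH'.2)
  · exact exists_mem_upperCovers_sup_le (hp.le_of_mem F hF.1)
      (hp.finrank_left ▸ h.crossIntersecting F hF.1 F₂ hF₂) hTF₂

lemma ncard_setOf_inf_coverJoin_le (hp : IsCoverPair f t ℱ₁ ℱ₂ T S)
    (hf : IsSymplecticForm f ν) (h : IsMaximalCross f m₁ m₂ t ℱ₁ ℱ₂) (hm₁ : m₁ ≤ ν) :
    ({F | F ∈ ℱ₁ ∧ coverJoin f t ℱ₂ T ⊓ F ≤ T}.ncard : ℚ) ≤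
      (qNumber (Nat.card K) (m₂ + 1 - t) : ℚ) ^ 2 *
        isotropicCount (Nat.card K) ν m₁ (t + 2) := by
  have := finite_submodule K V
  obtain ⟨F₀, hF₀, hTF₀⟩ := hp.exists_not_le
  have hcard : (upperCovers T (T ⊔ F₀)).ncard = qNumber (Nat.card K) (m₂ + 1 - t) := by
    rw [ncard_upperCovers le_sup_left, hp.finrank_sup hF₀ hTF₀, (h.subset_right hF₀).2,
      hp.finrank_left]
  rw [sq, mul_assoc]
  nth_rw 1 [← hcard]
  refine ncard_le_mul_of_subset_biUnion (Set.toFinite _)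
    (A := fun H ↦ {F | (F ∈ ℱ₁ ∧ coverJoin f t ℱ₂ T ⊓ F ≤ T) ∧ H ≤ F}) ?_ fun H hH ↦ ?_
  · intro F hF
    obtain ⟨H, hH, hHF⟩ := exists_mem_upperCovers_sup_le (hp.le_of_mem F hF.1)
      (hp.finrank_left ▸ h.crossIntersecting F hF.1 F₀ hF₀) hTF₀
    exact Set.mem_biUnion hH ⟨hF, hHF⟩
  by_cases hHcov : IsTCover f t ℱ₂ H
  · have hHM : H ≤ coverJoin f t ℱ₂ T := le_sSup
      ⟨hH.1.le, by rw [finrank_eq_add_one_of_covBy hH.1, hp.finrank_left], hHcov⟩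
    have hempty : {F | (F ∈ ℱ₁ ∧ coverJoin f t ℱ₂ T ⊓ F ≤ T) ∧ H ≤ F} = ∅ :=
      Set.eq_empty_of_forall_notMem fun F hF ↦
        hH.1.lt.not_ge ((le_inf hHM hF.2).trans hF.1.2)
    have := isotropicCount_nonneg (two_le_natCard K) hm₁ (t + 2)
    rw [hempty, Set.ncard_empty, Nat.cast_zero]
    positivity
  · refine le_trans ?_ (hp.ncard_setOf_le_of_not_isTCover hf h hm₁ hH.1 hHcov)
    gcongr
    · exact Set.toFinite _
    · exact fun hF ↦ hF.1

lemma ncard_left_le (hp : IsCoverPair f t ℱ₁ ℱ₂ T S) (hf : IsSymplecticForm f ν)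
    (h : IsMaximalCross f m₁ m₂ t ℱ₁ ℱ₂) (hm₁ : m₁ ≤ ν) :
    (ℱ₁.ncard : ℚ) ≤
      qNumber (Nat.card K) (finrank K (coverJoin f t ℱ₂ T) - t) *
        isotropicCount (Nat.card K) ν m₁ (t + 1) +
      (qNumber (Nat.card K) (m₂ + 1 - t) : ℚ) ^ 2 *
        isotropicCount (Nat.card K) ν m₁ (t + 2) := by
  have := finite_submodule K V
  have hcover : ({F | F ∈ ℱ₁ ∧ ¬ coverJoin f t ℱ₂ T ⊓ F ≤ T}.ncard : ℚ) ≤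
      qNumber (Nat.card K) (finrank K (coverJoin f t ℱ₂ T) - finrank K T) *
        isotropicCount (Nat.card K) ν m₁ (t + 1) := by
    refine hf.ncard_le_of_forall_exists_upperCovers_le hm₁ (fun F hF ↦ h.subset_left hF.1)
      hp.left_le_coverJoin (fun B hB ↦ ?_) (fun F hF ↦ hp.le_of_mem F hF.1) fun F hF ↦ ?_
    · rw [sup_eq_right.2 hB.1.le, finrank_eq_add_one_of_covBy hB.1, hp.finrank_left]
    · exact exists_mem_upperCovers_le hp.left_le_coverJoin (hp.le_of_mem F hF.1) hF.2
  have hsplit : ℱ₁.ncard ≤ {F | F ∈ ℱ₁ ∧ ¬ coverJoin f t ℱ₂ T ⊓ F ≤ T}.ncard +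
      {F | F ∈ ℱ₁ ∧ coverJoin f t ℱ₂ T ⊓ F ≤ T}.ncard := by
    refine le_trans (Set.ncard_le_ncard (fun F hF ↦ ?_) (Set.toFinite _)) (Set.ncard_union_le _ _)
    exact (em' _).imp (⟨hF, ·⟩) (⟨hF, ·⟩)
  rw [hp.finrank_left] at hcover
  calc (ℱ₁.ncard : ℚ) ≤ {F | F ∈ ℱ₁ ∧ ¬ coverJoin f t ℱ₂ T ⊓ F ≤ T}.ncard +
        {F | F ∈ ℱ₁ ∧ coverJoin f t ℱ₂ T ⊓ F ≤ T}.ncard := by exact_mod_cast hsplit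
    _ ≤ _ := add_le_add hcover (hp.ncard_setOf_inf_coverJoin_le hf h hm₁)

lemma ncard_left_le_mul (hp : IsCoverPair f t ℱ₁ ℱ₂ T S) (hf : IsSymplecticForm f ν)
    (h : IsMaximalCross f m₁ m₂ t ℱ₁ ℱ₂) (ht : 0 < t) (htm : t ≤ m₂) (hm₁ : m₁ ≤ ν)
    (hdim : m₁ + 2 * m₂ + 3 ≤ 2 * ν) (hM : finrank K (coverJoin f t ℱ₂ T) ≤ m₂) :
    (ℱ₁.ncard : ℚ) ≤ ((qNumber (Nat.card K) (m₂ - t) : ℚ) + 1 / 2) *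
      isotropicCount (Nat.card K) ν m₁ (t + 1) := by
  have hq := two_le_natCard K
  have hmono : (qNumber (Nat.card K) (finrank K (coverJoin f t ℱ₂ T) - t) : ℚ) ≤
      qNumber (Nat.card K) (m₂ - t) := by
    exact_mod_cast qNumber_mono _ (Nat.sub_le_sub_right hM t)
  have hsmall := sq_qNumber_mul_isotropicCount_le (ν := ν) (m := m₁) (d := m₂ + 1 - t) hq hm₁ ht
    (by omega)
  have hbound := hp.ncard_left_le hf h hm₁
  have := mul_le_mul_of_nonneg_right hmono (isotropicCount_nonneg (ν := ν) hq hm₁ (t + 1))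
  linarith

lemma ncard_right_le (hp : IsCoverPair f t ℱ₁ ℱ₂ T S) (hf : IsSymplecticForm f ν)
    (hℱ₂ : ℱ₂ ⊆ polar f m₂) (hm₂ : m₂ ≤ ν) {c : ℚ}
    (hc : ∀ U ≤ coverJoin f t ℱ₂ T, finrank K U + 1 = finrank K (coverJoin f t ℱ₂ T) →
      ({F | F ∈ ℱ₂ ∧ ¬ T ≤ F ∧ U ≤ F}.ncard : ℚ) ≤ c) :
    (ℱ₂.ncard : ℚ) ≤ isotropicCount (Nat.card K) ν m₂ t +
      (Nat.card K : ℚ) ^ finrank K (coverJoin f t ℱ₂ T) * c := by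
  have := finite_submodule K V
  set M := coverJoin f t ℱ₂ T
  have hc0 : 0 ≤ c := by
    obtain ⟨F₀, hF₀, hTF₀⟩ := hp.exists_not_le
    exact (Nat.cast_nonneg _).trans
      (hc (M ⊓ F₀) inf_le_left (hp.finrank_coverJoin_inf_add_one hF₀ hTF₀))
  have hrest : ({F | F ∈ ℱ₂ ∧ ¬ T ≤ F}.ncard : ℚ) ≤ (Nat.card K : ℚ) ^ finrank K M * c := by
    have hhyper : ({U : Submodule K V | U ≤ M ∧ finrank K U + 1 = finrank K M}.ncard : ℚ) ≤
        (Nat.card K : ℚ) ^ finrank K M := by exact_mod_cast ncard_hyperplanes_le M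
    refine (ncard_le_mul_of_subset_biUnion (Set.toFinite _) (fun F hF ↦ ?_) fun U hU ↦
      hc U hU.1 hU.2).trans (mul_le_mul_of_nonneg_right hhyper hc0)
    exact Set.mem_biUnion ⟨inf_le_left, hp.finrank_coverJoin_inf_add_one hF.1 hF.2⟩
      ⟨hF.1, hF.2, inf_le_right⟩
  have hsplit : ℱ₂.ncard ≤ (C3 f T m₂).ncard + {F | F ∈ ℱ₂ ∧ ¬ T ≤ F}.ncard := by
    refine le_trans (Set.ncard_le_ncard (fun F hF ↦ ?_) (Set.toFinite _)) (Set.ncard_union_le _ _)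
    exact (em _).imp (⟨hℱ₂ hF, ·⟩) (⟨hF, ·⟩)
  have hC3 := hf.ncard_C3_le hm₂ T
  rw [hp.finrank_left] at hC3
  calc (ℱ₂.ncard : ℚ) ≤ (C3 f T m₂).ncard + {F | F ∈ ℱ₂ ∧ ¬ T ≤ F}.ncard := by
        exact_mod_cast hsplit
    _ ≤ _ := add_le_add hC3 hrest

lemma ncard_setOf_hyperplane_le (hp : IsCoverPair f t ℱ₁ ℱ₂ T S) (hf : IsSymplecticForm f ν)
    (h : IsMaximalCross f m₁ m₂ t ℱ₁ ℱ₂) (hm₂ : m₂ ≤ ν) {F₁ : Submodule K V} (hF₁ : F₁ ∈ ℱ₁)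
    (hSF₁ : ¬ S ≤ F₁) {U : Submodule K V} (hUS : U ≤ S) (hU : finrank K U + 1 = finrank K S) :
    ({F | F ∈ ℱ₂ ∧ ¬ T ≤ F ∧ U ≤ F}.ncard : ℚ) ≤
      qNumber (Nat.card K) (m₁ + 1 - t) * isotropicCount (Nat.card K) ν m₂ (t + 1) := by
  have hT := hp.finrank_left
  have hS := hp.finrank_right
  by_cases hTU : T ≤ U
  · have hempty : {F | F ∈ ℱ₂ ∧ ¬ T ≤ F ∧ U ≤ F} = ∅ :=
      Set.eq_empty_of_forall_notMem fun F hF ↦ hF.2.1 (hTU.trans hF.2.2)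
    have := isotropicCount_nonneg (two_le_natCard K) hm₂ (t + 1)
    rw [hempty, Set.ncard_empty, Nat.cast_zero]
    positivity
  have hTF₁ := hp.le_of_mem F₁ hF₁
  have hinf : S ⊓ F₁ = T := by
    refine (Submodule.eq_of_le_of_finrank_le (le_inf hp.le hTF₁) ?_).symm
    have := finrank_inf_lt_of_not_le hSF₁
    omega
  have hTUinf : finrank K ↥(T ⊓ U) + 1 = t := by
    have := finrank_inf_lt_of_not_le hTU
    have := Submodule.finrank_sup_add_finrank_inf_eq T U
    have := Submodule.finrank_mono (sup_le hp.le hUS)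
    omega
  rw [show m₁ + 1 - t = finrank K F₁ - finrank K ↥(T ⊓ U) by
    rw [(h.subset_left hF₁).2]; omega]
  refine hf.ncard_le_of_forall_exists_upperCovers_le hm₂ (fun F hF ↦ h.subset_right hF.1)
    (inf_le_left.trans hTF₁) (fun B hB ↦ ?_) (fun F hF ↦ hF.2.2) fun F hF ↦ ?_
  · have hUB : U ⊓ B = T ⊓ U := le_antisymm
      (le_inf ((le_inf (inf_le_left.trans hUS) (inf_le_right.trans hB.2)).trans hinf.le)
        inf_le_left) (le_inf inf_le_right hB.1.le)
    have hdim := Submodule.finrank_sup_add_finrank_inf_eq U B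
    rw [hUB, finrank_eq_add_one_of_covBy hB.1] at hdim
    omega
  · have hnle := not_inf_le_of_finrank_le (hT ▸ h.crossIntersecting F₁ hF₁ F hF.1) hF.2.1
    exact exists_mem_upperCovers_le (inf_le_left.trans hTF₁) (inf_le_right.trans hF.2.2)
      fun hle ↦ hnle (hle.trans inf_le_left)

lemma exists_ncard_setOf_hyperplane_le (hp : IsCoverPair f t ℱ₁ ℱ₂ T S)
    (hf : IsSymplecticForm f ν) (h : IsMaximalCross f m₁ m₂ t ℱ₁ ℱ₂) (htm₁ : t ≤ m₁)
    (htm₂ : t ≤ m₂) (hdim : m₁ + 2 * m₂ + 3 ≤ 2 * ν) (hS : ∃ F ∈ ℱ₁, ¬ S ≤ F) :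
    ∃ c : ℚ, (∀ U ≤ coverJoin f t ℱ₂ T, finrank K U + 1 = finrank K (coverJoin f t ℱ₂ T) →
        ({F | F ∈ ℱ₂ ∧ ¬ T ≤ F ∧ U ≤ F}.ncard : ℚ) ≤ c) ∧
      (Nat.card K : ℚ) ^ (m₂ + 1 - t) * ((Nat.card K : ℚ) ^ finrank K (coverJoin f t ℱ₂ T) * c) ≤
        isotropicCount (Nat.card K) ν m₂ t := by
  have := finite_submodule K V
  have hq := two_le_natCard K
  have hm₂ : m₂ ≤ ν := by omega
  have hSM := hp.finrank_right.ge.trans (Submodule.finrank_mono hp.right_le_coverJoin)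
  rcases hSM.lt_or_eq with hlarge | heq
  · refine ⟨isotropicCount (Nat.card K) ν m₂ (finrank K (coverJoin f t ℱ₂ T) - 1),
      fun U _ hU ↦ ?_, ?_⟩
    · rw [← hU, Nat.add_sub_cancel]
      refine le_trans ?_ (hf.ncard_C3_le hm₂ U)
      gcongr
      · exact Set.toFinite _
      · exact fun _ hF ↦ ⟨h.subset_right hF.1, hF.2.2⟩
    · exact pow_mul_pow_mul_isotropicCount_le_of_add_two_le hq hm₂ htm₂ hlarge (by omega)
  · obtain ⟨F₁, hF₁, hSF₁⟩ := hS
    have hSeq : S = coverJoin f t ℱ₂ T := Submodule.eq_of_le_of_finrank_eq hp.right_le_coverJoin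
      (hp.finrank_right.trans heq)
    refine ⟨_, fun U hUM hU ↦ hp.ncard_setOf_hyperplane_le hf h hm₂ hF₁ hSF₁ (hSeq ▸ hUM)
      (hSeq ▸ hU), ?_⟩
    rw [← heq]
    exact pow_mul_pow_mul_qNumber_mul_isotropicCount_le hq hm₂ htm₁ htm₂ hdim

lemma ncard_right_le_mul (hp : IsCoverPair f t ℱ₁ ℱ₂ T S) (hf : IsSymplecticForm f ν)
    (h : IsMaximalCross f m₁ m₂ t ℱ₁ ℱ₂) (htm₁ : t ≤ m₁) (htm₂ : t ≤ m₂)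
    (hdim : m₁ + 2 * m₂ + 3 ≤ 2 * ν) (hS : ∃ F ∈ ℱ₁, ¬ S ≤ F) :
    (ℱ₂.ncard : ℚ) ≤
      (1 + 1 / (Nat.card K : ℚ) ^ (m₂ + 1 - t)) * isotropicCount (Nat.card K) ν m₂ t := by
  have hpow : (0 : ℚ) < (Nat.card K : ℚ) ^ (m₂ + 1 - t) := by
    exact_mod_cast pow_pos Nat.card_pos _
  obtain ⟨c, hc, hsmall⟩ := hp.exists_ncard_setOf_hyperplane_le hf h htm₁ htm₂ hdim hS
  refine (hp.ncard_right_le hf h.subset_right (by omega) hc).trans ?_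
  rw [add_mul, one_mul, one_div_mul_eq_div, add_le_add_iff_left, le_div_iff₀' hpow]
  exact hsmall

end IsCoverPair

variable [FiniteDimensional K V] [Finite K] {f : LinearMap.BilinForm K V} {ν m₁ m₂ t : ℕ}
  {ℱ₁ ℱ₂ : Set (Submodule K V)} {T S M : Submodule K V}

lemma IsSymplecticForm.le_ncard_C1 (hf : IsSymplecticForm f ν) (ht : 0 < t) (hm₁ : m₁ ≤ ν)
    (htm₁ : t + 1 ≤ m₁) (htm₂ : t ≤ m₂) (hdim : m₁ + 2 * m₂ + 3 ≤ 2 * ν)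
    (hM : M ∈ polar f (m₂ + 1)) (hTM : T ≤ M) (hT : finrank K T = t) :
    ((qNumber (Nat.card K) (m₂ + 1 - t) : ℚ) - 1 / 2) *
      isotropicCount (Nat.card K) ν m₁ (t + 1) ≤ (C1 f M T m₁ t).ncard := by
  have hbound := hf.qNumber_mul_le_ncard_C1_add hm₁ htm₁ hM.1 hTM hT
  rw [hM.2] at hbound
  have hsmall := sq_qNumber_mul_isotropicCount_le (ν := ν) (m := m₁) (d := m₂ + 1 - t)
    (two_le_natCard K) hm₁ ht (by omega)
  linarith

lemma IsSymplecticForm.le_ncard_C2 (hf : IsSymplecticForm f ν) (hm₂ : m₂ ≤ ν) (htm₂ : t ≤ m₂)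
    (hM : TotallyIsotropic f M) (hTM : T ≤ M) (hT : finrank K T = t) :
    isotropicCount (Nat.card K) ν m₂ t ≤ (C2 f M T m₂).ncard := by
  have := finite_submodule K V
  rw [← hf.ncard_C3 hm₂ ⟨hM.mono hTM, hT⟩ htm₂]
  exact_mod_cast Set.ncard_le_ncard Set.subset_union_left (Set.toFinite _)

lemma IsCoverPair.ncard_mul_ncard_lt {T' : Submodule K V} (hp : IsCoverPair f t ℱ₁ ℱ₂ T S)
    (hf : IsSymplecticForm f ν) (h : IsMaximalCross f m₁ m₂ t ℱ₁ ℱ₂) (ht : 0 < t)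
    (hm₁ : m₁ ≤ ν) (htm₁ : t + 1 ≤ m₁) (htm₂ : t + 1 ≤ m₂)
    (hdim : m₁ + 2 * m₂ + 3 ≤ 2 * ν) (hjoin : finrank K (coverJoin f t ℱ₂ T) ≤ m₂)
    (hS : ∃ F ∈ ℱ₁, ¬ S ≤ F) (hM : M ∈ polar f (m₂ + 1)) (hTM : T' ≤ M)
    (hT : finrank K T' = t) :
    ℱ₁.ncard * ℱ₂.ncard < (C1 f M T' m₁ t).ncard * (C2 f M T' m₂).ncard := by
  have hq := two_le_natCard K
  set N₁ := isotropicCount (Nat.card K) ν m₁ (t + 1)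
  set N₂ := isotropicCount (Nat.card K) ν m₂ t
  have hN₁ : 0 < N₁ := isotropicCount_pos hq hm₁ htm₁
  have hN₂ : 0 < N₂ := isotropicCount_pos hq (by omega) (by omega)
  have hC1 := hf.le_ncard_C1 ht hm₁ htm₁ (by omega) hdim hM hTM hT
  have hC2 := hf.le_ncard_C2 (m₂ := m₂) (by omega) (by omega) hM.1 hTM hT
  have hleft := hp.ncard_left_le_mul hf h ht (by omega) hm₁ hdim hjoin
  have hright := hp.ncard_right_le_mul hf h (by omega) (by omega) hdim hS
  have hgap := qNumber_add_half_mul_lt (b := m₂ - t) hq (by omega)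
  rw [← Nat.sub_add_comm (by omega : t ≤ m₂)] at hgap
  have hlt : (ℱ₁.ncard : ℚ) * ℱ₂.ncard < (C1 f M T' m₁ t).ncard * (C2 f M T' m₂).ncard := calc
    (ℱ₁.ncard : ℚ) * ℱ₂.ncard ≤ ((qNumber (Nat.card K) (m₂ - t) + 1 / 2) * N₁) *
        ((1 + 1 / (Nat.card K : ℚ) ^ (m₂ + 1 - t)) * N₂) := by gcongr
    _ = ((qNumber (Nat.card K) (m₂ - t) + 1 / 2) *
        (1 + 1 / (Nat.card K : ℚ) ^ (m₂ + 1 - t))) * (N₁ * N₂) := by ring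
    _ < (qNumber (Nat.card K) (m₂ + 1 - t) - 1 / 2) * (N₁ * N₂) := by gcongr
    _ = (qNumber (Nat.card K) (m₂ + 1 - t) - 1 / 2) * N₁ * N₂ := by ring
    _ ≤ (C1 f M T' m₁ t).ncard * (C2 f M T' m₂).ncard := by gcongr
  exact_mod_cast hlt

end Bounds

theorem stmt_19_general [FiniteDimensional K V] [Finite K] {f : LinearMap.BilinForm K V}
    {ν m₁ m₂ t : ℕ} {ℱ₁ ℱ₂ : Set (Submodule K V)} (hf : IsSymplecticForm f ν) (ht : 0 < t)
    (hm₁ : t + 1 ≤ m₁) (hm₂ : t + 1 ≤ m₂) (hm₁ν : m₁ ≤ ν) (hdim : m₁ + 2 * m₂ + 3 ≤ 2 * ν)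
    (h : IsMaximalCross f m₁ m₂ t ℱ₁ ℱ₂)
    (htau₁ : tauCover f t ℱ₁ = t) (htau₂ : tauCover f t ℱ₂ = t + 1) :
    (∃ M ∈ polar f (m₂ + 1), ∃ T : Submodule K V,
        T ≤ M ∧ finrank K T = t ∧ ℱ₁ = C1 f M T m₁ t ∧ ℱ₂ = C2 f M T m₂) ∨
      (∃ S ∈ polar f (t + 1), ℱ₁ = C3 f S m₁ ∧ ℱ₂ = C4 f S m₂ t) ∨
      (∀ M ∈ polar f (m₂ + 1), ∀ T : Submodule K V, T ≤ M → finrank K T = t →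
        ℱ₁.ncard * ℱ₂.ncard < (C1 f M T m₁ t).ncard * (C2 f M T m₂).ncard) := by
  obtain ⟨T, S, hp⟩ := h.exists_isCoverPair hf ht (by omega) (by omega) htau₁ htau₂
  rcases (hp.finrank_coverJoin_le h.subset_right).eq_or_lt with heq | hlt
  · exact .inl ⟨coverJoin f t ℱ₂ T,
      ⟨hp.totallyIsotropic_coverJoin hf.isAlt.isRefl h.subset_right, heq⟩, T,
      hp.left_le_coverJoin, hp.finrank_left, hp.eq_C1_and_eq_C2 h heq⟩
  by_cases hS : ∀ F ∈ ℱ₁, S ≤ F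
  · exact .inr (.inl ⟨S, ⟨hp.isTCover.1, hp.finrank_right⟩, hp.eq_C3_and_eq_C4 h hS⟩)
  · push Not at hS
    exact .inr (.inr fun M hM T' hTM hT ↦ hp.ncard_mul_ncard_lt hf h ht hm₁ν hm₁ hm₂ hdim
      (Nat.lt_succ_iff.1 hlt) hS hM hTM hT)

theorem stmt_19
    (q ν m₁ m₂ t : ℕ) (hq : IsPrimePow q)
    {K : Type} [Field K] [Fintype K] (hK : Fintype.card K = q)
    (f : (Fin (2 * ν) → K) →ₗ[K] (Fin (2 * ν) → K) →ₗ[K] K)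
    (halt : ∀ v, f v v = 0)
    (hnd : ∀ v, (∀ w, f v w = 0) → v = 0)
    (ht : 0 < t) (hm₁ : t + 1 ≤ m₁) (hm₂ : t + 1 ≤ m₂) (hm₁ν : m₁ < ν) (hm₂ν : m₂ < ν)
    (hdim : m₁ + 2 * m₂ + 3 ≤ 2 * ν)
    (ℱ₁ ℱ₂ : Set (Submodule K (Fin (2 * ν) → K)))
    (h1ne : ℱ₁.Nonempty) (h2ne : ℱ₂.Nonempty)
    (h1 : ℱ₁ ⊆ polar f m₁) (h2 : ℱ₂ ⊆ polar f m₂)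
    (hcross : ∀ F₁ ∈ ℱ₁, ∀ F₂ ∈ ℱ₂, t ≤ finrank K ↥(F₁ ⊓ F₂))
    (hnt : ¬ ∃ T ∈ polar f t, (∀ F ∈ ℱ₁, T ≤ F) ∧ (∀ F ∈ ℱ₂, T ≤ F))
    (hmax : ∀ 𝒢₁ 𝒢₂ : Set (Submodule K (Fin (2 * ν) → K)),
      𝒢₁ ⊆ polar f m₁ → 𝒢₂ ⊆ polar f m₂ →
      (∀ G₁ ∈ 𝒢₁, ∀ G₂ ∈ 𝒢₂, t ≤ finrank K ↥(G₁ ⊓ G₂)) →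
      ℱ₁ ⊆ 𝒢₁ → ℱ₂ ⊆ 𝒢₂ → 𝒢₁ = ℱ₁ ∧ 𝒢₂ = ℱ₂)
    (htau₁ : tauCover f t ℱ₁ = t) (htau₂ : tauCover f t ℱ₂ = t + 1) :
    (∃ M ∈ polar f (m₂ + 1), ∃ T : Submodule K (Fin (2 * ν) → K),
        T ≤ M ∧ finrank K T = t ∧ ℱ₁ = C1 f M T m₁ t ∧ ℱ₂ = C2 f M T m₂) ∨
      (∃ S ∈ polar f (t + 1), ℱ₁ = C3 f S m₁ ∧ ℱ₂ = C4 f S m₂ t) ∨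
      (∀ M ∈ polar f (m₂ + 1), ∀ T : Submodule K (Fin (2 * ν) → K),
        T ≤ M → finrank K T = t →
        ℱ₁.ncard * ℱ₂.ncard < (C1 f M T m₁ t).ncard * (C2 f M T m₂).ncard) := by
  have hsymp : IsSymplecticForm f ν :=
    ⟨halt, (LinearMap.IsAlt.isRefl halt).nondegenerate_iff_separatingLeft.2 hnd, by simp⟩
  exact stmt_19_general hsymp ht hm₁ hm₂ hm₁ν.le hdim ⟨h1, h2, hcross, hmax⟩ htau₁ htau₂

end
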